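/- Let n, p, q ≥ 1 and T > 0. Let f : ℝⁿ × ℝᵖ × ℝ → ℝⁿ and g : ℝⁿ × ℝ^q × ℝ → ℝⁿ be continuously differentiable. For parameters θ ∈ ℝᵖ and φ ∈ ℝ^q, let z(·; θ, φ) : [0, T] → ℝⁿ be the continuous path with fixed initial condition z(0) = z₀ that satisfies z'(t) = f(z(t), θ, t) for t ∈ [0, T/2] and z'(t) = g(z(t), φ, t) for t ∈ (T/2, T], and assume (θ, φ) ↦ z(t; θ, φ) is continuously differentiable with derivative jointly continuous in t. For t ∈ [0, T] let Φ_{t,T} denote the map sending x ∈ ℝⁿ to the value at time T of the piecewise solution passing through x at time t, assumed continuously differentiable in x with derivative jointly continuous in (t, x). Let L : ℝⁿ → ℝ be differentiable and set a(t) = DL(z(T)) ∘ D_x Φ_{t,T}(z(t)). Then d/dθ [ L(z(T; θ, φ)) ] = ∫₀^{T/2} a(t) ∘ (D_θ f)(z(t), θ, t) dt and d/dφ [ L(z(T; θ, φ)) ] = ∫_{T/2}^{T} a(t) ∘ (D_φ g)(z(t), φ, t) dt. -/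

import Mathlib

open Set intervalIntegral

/-!
The terminal map `Φ t` is conserved along the trajectories of the reference parameters. Along a
path `x θ` of perturbed parameters it therefore changes only through the difference of the two
fields (the Alekseev–Gröbner formula):
`Φ b (x θ b) - Φ a (x θ a) = ∫ t in a..b, DΦ t (x θ t) (f (x θ t, θ, t) - f (x θ t, θ₀, t))`.
On the stage whose field is not perturbed there is no change. On the other stage the integrand
vanishes at `θ = θ₀`, so to first order the dependence of `x θ` on `θ` does not contribute, and
the derivative is the integral of `DΦ t (x θ₀ t)` against the parameter Jacobian of `f`.
-/

open Filter Topology Asymptotics MeasureTheory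

section ParametricFamilies

variable {X P E F : Type*} [NormedAddCommGroup P] [NormedSpace ℝ P]
  [NormedAddCommGroup E] [NormedSpace ℝ E] [NormedAddCommGroup F] [NormedSpace ℝ F]

theorem isLittleO_image_sub_image_of_tendsto_fderiv {l : Filter X} {Ψ : X → E → F}
    {Ψ' : X → E → E →L[ℝ] F} {A : E →L[ℝ] F} {x₀ : E} {u v : X → E}
    (hΨ : ∀ᶠ s in l ×ˢ 𝓝 x₀, HasFDerivAt (Ψ s.1) (Ψ' s.1 s.2) s.2)
    (hΨ' : Tendsto ↿Ψ' (l ×ˢ 𝓝 x₀) (𝓝 A)) (hu : Tendsto u l (𝓝 x₀)) (hv : Tendsto v l (𝓝 x₀)) :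
    (fun s => Ψ s (u s) - Ψ s (v s) - A (u s - v s)) =o[l] fun s => u s - v s := by
  refine isLittleO_iff.2 fun ε hε => ?_
  obtain ⟨p, hp, q, hq, hpq⟩ := eventually_prod_iff.1
    (hΨ.and (hΨ'.eventually (Metric.ball_mem_nhds A hε)))
  obtain ⟨δ, hδ, hball⟩ := Metric.eventually_nhds_iff_ball.1 hq
  filter_upwards [hp, hu (Metric.ball_mem_nhds x₀ hδ), hv (Metric.ball_mem_nhds x₀ hδ)]
    with s hs hus hvs
  exact (convex_ball x₀ δ).norm_image_sub_le_of_norm_hasFDerivWithin_le'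
    (fun x hx => (hpq hs (hball x hx)).1.hasFDerivWithinAt)
    (fun x hx => (mem_ball_iff_norm.1 (hpq hs (hball x hx)).2).le) hvs hus

theorem continuousOn_uncurry_of_hasFDerivAt [TopologicalSpace X] {S : Set X}
    {u : P → X → E} {u' : X → P → P →L[ℝ] E} (hu : ∀ p, ContinuousOn (u p) S)
    (hu' : ∀ t ∈ S, ∀ p, HasFDerivAt (fun q => u q t) (u' t p) p)
    (hu'c : ContinuousOn ↿u' (S ×ˢ univ)) : ContinuousOn ↿u (univ ×ˢ S) := by
  rintro ⟨p₀, t₀⟩ ⟨-, ht₀⟩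
  have hp : Tendsto Prod.fst (𝓝 p₀ ×ˢ 𝓝[S] t₀) (𝓝 p₀) := tendsto_fst
  have ht : Tendsto Prod.snd (𝓝 p₀ ×ˢ 𝓝[S] t₀) (𝓝[S] t₀) := tendsto_snd
  have hlin : (fun s : P × X => u s.1 s.2 - u p₀ s.2 - u' t₀ p₀ (s.1 - p₀))
      =o[𝓝 p₀ ×ˢ 𝓝[S] t₀] fun s => s.1 - p₀ := by
    refine isLittleO_image_sub_image_of_tendsto_fderiv (Ψ := fun s q => u q s.2)
      (Ψ' := fun s q => u' s.2 q) ?_ ?_ hp tendsto_const_nhds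
    · filter_upwards [(ht.comp tendsto_fst).eventually self_mem_nhdsWithin] with s hs
        using hu' s.1.2 hs s.2
    · have hu'₀ := hu'c (t₀, p₀) ⟨ht₀, mem_univ _⟩
      rw [ContinuousWithinAt, nhdsWithin_prod_eq, nhdsWithin_univ] at hu'₀
      exact hu'₀.comp ((ht.comp tendsto_fst).prodMk tendsto_snd)
  have hp₀ : Tendsto (fun s : P × X => s.1 - p₀) (𝓝 p₀ ×ˢ 𝓝[S] t₀) (𝓝 0) := by
    simpa only [sub_self] using hp.sub_const p₀
  have hincr : Tendsto (fun s : P × X => u s.1 s.2 - u p₀ s.2) (𝓝 p₀ ×ˢ 𝓝[S] t₀) (𝓝 0) := by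
    simpa using (hlin.trans_tendsto hp₀).add
      (((u' t₀ p₀).continuous.tendsto' 0 0 (map_zero _)).comp hp₀)
  rw [ContinuousWithinAt, nhdsWithin_prod_eq, nhdsWithin_univ]
  simpa [Function.HasUncurry.uncurry] using hincr.add ((hu p₀ t₀ ht₀).tendsto.comp ht)

theorem eventually_forall_norm_diag_sub_le [TopologicalSpace X] {K : Set X} (hK : IsCompact K)
    {G : P → P → X → E} {G' : P → P → X → P →L[ℝ] E} {θ₀ : P}
    (hG : ∀ η θ, ∀ t ∈ K, HasFDerivAt (fun ϑ => G η ϑ t) (G' η θ t) θ)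
    (hG' : ContinuousOn (fun s : (P × P) × X => G' s.1.1 s.1.2 s.2) (univ ×ˢ K))
    {ε : ℝ} (hε : 0 < ε) :
    ∀ᶠ θ in 𝓝 θ₀, ∀ t ∈ K,
      ‖G θ θ t - G θ θ₀ t - G' θ₀ θ₀ t (θ - θ₀)‖ ≤ ε * ‖θ - θ₀‖ := by
  obtain ⟨V, hV, hVε⟩ := hK.mem_uniformity_of_prod
    (f := fun p : P × P => G' p.1 p.2) hG' (mem_univ (θ₀, θ₀)) (Metric.dist_mem_uniformity hε)
  obtain ⟨r, hr, hrV⟩ := Metric.mem_nhds_iff.1 (nhdsWithin_univ (θ₀, θ₀) ▸ hV)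
  filter_upwards [Metric.ball_mem_nhds θ₀ hr] with θ hθ t ht
  refine (convex_ball θ₀ r).norm_image_sub_le_of_norm_hasFDerivWithin_le'
    (fun ϑ _ => (hG θ ϑ t ht).hasFDerivWithinAt) (fun ϑ hϑ => ?_) (Metric.mem_ball_self hr) hθ
  have hmem : (θ, ϑ) ∈ Metric.ball (θ₀, θ₀) r := by
    rw [← ball_prod_same]
    exact ⟨hθ, hϑ⟩
  rw [← dist_eq_norm]
  exact (hVε (θ, ϑ) (hrV hmem) t ht).le

-- Only the second parameter slot of `G` is differentiated: subtracting `G θ θ₀` cancels the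
-- first-order effect of the first slot.
theorem hasFDerivAt_integral_diag_sub {a b : ℝ} {G : P → P → ℝ → E}
    {G' : P → P → ℝ → P →L[ℝ] E} (θ₀ : P)
    (hG : ∀ η θ, IntervalIntegrable (G η θ) volume a b)
    (hG' : ∀ η θ, ∀ t ∈ uIcc a b, HasFDerivAt (fun ϑ => G η ϑ t) (G' η θ t) θ)
    (hG'c : ContinuousOn (fun s : (P × P) × ℝ => G' s.1.1 s.1.2 s.2) (univ ×ˢ uIcc a b)) :
    HasFDerivAt (fun θ => ∫ t in a..b, (G θ θ t - G θ θ₀ t)) (∫ t in a..b, G' θ₀ θ₀ t) θ₀ := by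
  have hG'₀ : ContinuousOn (G' θ₀ θ₀) (uIcc a b) :=
    hG'c.comp (f := fun t => ((θ₀, θ₀), t)) (by fun_prop) fun t ht => ⟨mem_univ _, ht⟩
  have hremainder : ∀ θ, (∫ t in a..b, (G θ θ t - G θ θ₀ t)) -
      (∫ t in a..b, (G θ₀ θ₀ t - G θ₀ θ₀ t)) - (∫ t in a..b, G' θ₀ θ₀ t) (θ - θ₀) =
      ∫ t in a..b, (G θ θ t - G θ θ₀ t - G' θ₀ θ₀ t (θ - θ₀)) := fun θ => by
    rw [intervalIntegral.integral_sub ((hG θ θ).sub (hG θ θ₀))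
      (hG'₀.clm_apply continuousOn_const).intervalIntegrable,
      ContinuousLinearMap.intervalIntegral_apply hG'₀.intervalIntegrable]
    simp
  rw [hasFDerivAt_iff_isLittleO, isLittleO_iff]
  intro ε hε
  filter_upwards [eventually_forall_norm_diag_sub_le isCompact_uIcc hG' hG'c
    (show 0 < ε / (|b - a| + 1) by positivity)] with θ hθ
  rw [hremainder]
  calc ‖∫ t in a..b, (G θ θ t - G θ θ₀ t - G' θ₀ θ₀ t (θ - θ₀))‖
      ≤ ε / (|b - a| + 1) * ‖θ - θ₀‖ * |b - a| :=
        norm_integral_le_of_norm_le_const fun t ht => hθ t (uIoc_subset_uIcc ht)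
    _ = ε * ‖θ - θ₀‖ * (|b - a| / (|b - a| + 1)) := by ring
    _ ≤ ε * ‖θ - θ₀‖ := mul_le_of_le_one_right (by positivity)
        (div_le_one_of_le₀ (by linarith) (by positivity))

theorem hasFDerivAt_comp_of_integral [CompleteSpace E] [CompleteSpace F] {a b : ℝ} {y : P → E}
    {A : ℝ → P →L[ℝ] E} {L : E → F} {L' : E →L[ℝ] F} {θ₀ : P} (hL : HasFDerivAt L L' (y θ₀))
    (hy : HasFDerivAt y (∫ t in a..b, A t) θ₀) (hA : IntervalIntegrable A volume a b) :
    HasFDerivAt (fun θ => L (y θ)) (∫ t in a..b, L'.comp (A t)) θ₀ := by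
  have hcomm := (ContinuousLinearMap.compL ℝ P E F L').intervalIntegral_comp_comm hA
  exact (hL.comp θ₀ hy).congr_fderiv hcomm.symm

theorem continuous_fderiv_parameter {f : E × P × ℝ → F} (hf : ContDiff ℝ 1 f) :
    Continuous fun s : E × P × ℝ => fderiv ℝ (fun θ => f (s.1, θ, s.2.2)) s.2.1 := by
  fun_prop

end ParametricFamilies

section IntegralCurves

variable {E : Type*} [NormedAddCommGroup E] [NormedSpace ℝ E] {v : ℝ → E → E}
  {y y₁ y₂ : ℝ → E} {a b : ℝ}

theorem isIntegralCurveOn_Icc_of_Ioc (hab : a < b) (hv : Continuous ↿v)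
    (hy : ContinuousOn y (Icc a b)) (hyv : IsIntegralCurveOn y v (Ioc a b)) :
    IsIntegralCurveOn y v (Icc a b) := by
  intro s hs
  rcases hs.1.eq_or_lt with rfl | has
  · have hderiv : ∀ r ∈ Ioo a b, HasDerivAt y (v r (y r)) r := fun r hr =>
      (hyv r (Ioo_subset_Ioc_self hr)).hasDerivAt (Ioc_mem_nhds hr.1 hr.2)
    have hmem : Ioo a b ∈ 𝓝[>] a := Ioo_mem_nhdsGT hab
    have hya : ContinuousWithinAt y (Ioo a b) a := (hy a hs).mono Ioo_subset_Icc_self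
    have hlim : Tendsto (fun r => v r (y r)) (𝓝[>] a) (𝓝 (v a (y a))) := by
      rw [← nhdsWithin_Ioo_eq_nhdsGT hab]
      exact (hv.tendsto (a, y a)).comp (continuousWithinAt_id.prodMk hya).tendsto
    refine (hasDerivWithinAt_Ici_of_tendsto_deriv (s := Ioo a b)
      (fun r hr => (hderiv r hr).differentiableAt.differentiableWithinAt) hya hmem ?_).mono
      Icc_subset_Ici_self
    exact hlim.congr' (by filter_upwards [hmem] with r hr using (hderiv r hr).deriv.symm)
  · refine (hyv s ⟨has, hs.2⟩).mono_of_mem_nhdsWithin ?_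
    filter_upwards [self_mem_nhdsWithin, mem_nhdsWithin_of_mem_nhds (Ioi_mem_nhds has)]
      with r hr har using ⟨har, hr.2⟩

theorem eqOn_Icc_of_isIntegralCurveOn (hv : ContDiff ℝ 1 ↿v)
    (hy₁ : IsIntegralCurveOn y₁ v (Icc a b)) (hy₂ : IsIntegralCurveOn y₂ v (Icc a b))
    (h : y₁ a = y₂ a) : EqOn y₁ y₂ (Icc a b) := by
  have hright : ∀ {y : ℝ → E}, IsIntegralCurveOn y v (Icc a b) →
      ∀ s ∈ Ico a b, HasDerivWithinAt y (v s (y s)) (Ici s) s := fun hy s hs =>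
    (hy s (Ico_subset_Icc_self hs)).mono_of_mem_nhdsWithin
      (mem_of_superset (Icc_mem_nhdsGE hs.2) (Icc_subset_Icc_left hs.1))
  set K : Set E := y₁ '' Icc a b ∪ y₂ '' Icc a b
  have hK : IsCompact K :=
    (isCompact_Icc.image_of_continuousOn hy₁.continuousOn).union
      (isCompact_Icc.image_of_continuousOn hy₂.continuousOn)
  obtain ⟨C, hC⟩ := LocallyLipschitzOn.exists_lipschitzOnWith_of_compact
    (isCompact_Icc (a := a) (b := b) |>.prod hK) hv.locallyLipschitz.locallyLipschitzOn
  have hlip : ∀ s ∈ Ico a b, LipschitzOnWith C (v s) K := fun s hs =>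
    LipschitzOnWith.of_dist_le_mul fun x hx x' hx' => by
      simpa [Prod.dist_eq, Function.HasUncurry.uncurry] using hC.dist_le_mul
        (s, x) ⟨Ico_subset_Icc_self hs, hx⟩ (s, x') ⟨Ico_subset_Icc_self hs, hx'⟩
  exact ODE_solution_unique_of_mem_Icc_right hlip
    hy₁.continuousOn (hright hy₁) (fun s hs => .inl ⟨s, Ico_subset_Icc_self hs, rfl⟩)
    hy₂.continuousOn (hright hy₂) (fun s hs => .inr ⟨s, Ico_subset_Icc_self hs, rfl⟩) h

end IntegralCurves

section FlowInvariants

variable {P E F G : Type*} [NormedAddCommGroup E] [NormedSpace ℝ E]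

/-- `Φ` is a time-dependent first integral of the field `v` on `S`: every state at a time of `S`
lies on an integral curve of `v` on `S` along which `Φ` is conserved. The existence of these
curves on all of `S` is part of the definition. -/
def IsFlowInvariantOn (Φ : ℝ → E → F) (v : ℝ → E → E) (S : Set ℝ) : Prop :=
  ∀ t ∈ S, ∀ x, ∃ y, y t = x ∧ IsIntegralCurveOn y v S ∧ ∀ s ∈ S, Φ s (y s) = Φ t x

variable {Φ : ℝ → E → F} {v w : ℝ → E → E} {u : ℝ → E} {a b : ℝ}

theorem IsFlowInvariantOn.image_right_eq (hΦ : IsFlowInvariantOn Φ v (Icc a b)) (hab : a ≤ b)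
    (hv : ContDiff ℝ 1 ↿v) (hu : IsIntegralCurveOn u v (Icc a b)) : Φ b (u b) = Φ a (u a) := by
  obtain ⟨y, hya, hy, hΦy⟩ := hΦ a (left_mem_Icc.2 hab) (u a)
  have hyb : y b = u b := eqOn_Icc_of_isIntegralCurveOn hv hy hu hya (right_mem_Icc.2 hab)
  exact hyb ▸ hΦy b (right_mem_Icc.2 hab)

variable [NormedAddCommGroup F] [NormedSpace ℝ F] {Φ' : ℝ → E → E →L[ℝ] F}

theorem hasDerivWithinAt_image_of_isFlowInvariantOn {S : Set ℝ} {t : ℝ} {u' : E}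
    (hΦ : IsFlowInvariantOn Φ v S) (hΦ' : ∀ s ∈ S, ∀ x, HasFDerivAt (Φ s) (Φ' s x) x)
    (hΦ'c : ContinuousOn ↿Φ' (S ×ˢ univ)) (ht : t ∈ S) (hu : HasDerivWithinAt u u' S t) :
    HasDerivWithinAt (fun s => Φ s (u s)) (Φ' t (u t) (u' - v t (u t))) S t := by
  obtain ⟨y, hyt, hyv, hΦy⟩ := hΦ t ht (u t)
  have hy : HasDerivWithinAt y (v t (u t)) S t := hyt ▸ hyv t ht
  have hsub : HasDerivWithinAt (fun s => u s - y s) (u' - v t (u t)) S t := hu.sub hy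
  have hO : (fun s => u s - y s) =O[𝓝[S] t] fun s => s - t := by
    simpa [hyt] using hsub.hasFDerivWithinAt.isBigO_sub
  have hlin : (fun s => Φ s (u s) - Φ s (y s) - Φ' t (u t) (u s - y s))
      =o[𝓝[S] t] fun s => u s - y s := by
    refine isLittleO_image_sub_image_of_tendsto_fderiv (Ψ' := Φ') (x₀ := u t) ?_ ?_
      hu.continuousWithinAt (hyt ▸ hy.continuousWithinAt)
    · filter_upwards [tendsto_fst.eventually self_mem_nhdsWithin] with s hs
        using hΦ' s.1 hs s.2
    · have hΦ'₀ := hΦ'c (t, u t) ⟨ht, mem_univ _⟩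
      rwa [ContinuousWithinAt, nhdsWithin_prod_eq, nhdsWithin_univ] at hΦ'₀
  rw [hasDerivWithinAt_iff_isLittleO]
  refine ((hlin.trans_isBigO hO).add (((Φ' t (u t)).isBigO_comp _ _).trans_isLittleO
    (hasDerivWithinAt_iff_isLittleO.1 hsub))).congr' ?_ EventuallyEq.rfl
  filter_upwards [self_mem_nhdsWithin] with s hs
  simp only [hyt, map_sub, map_smul, sub_self, sub_zero, hΦy s hs]
  abel

theorem image_sub_image_eq_integral_of_isFlowInvariantOn [CompleteSpace F] (hab : a ≤ b)
    (hΦ : IsFlowInvariantOn Φ v (Icc a b))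
    (hΦ' : ∀ t ∈ Icc a b, ∀ x, HasFDerivAt (Φ t) (Φ' t x) x)
    (hΦ'c : ContinuousOn ↿Φ' (Icc a b ×ˢ univ)) (hu : IsIntegralCurveOn u w (Icc a b))
    (hv : ContinuousOn (fun t => v t (u t)) (Icc a b))
    (hw : ContinuousOn (fun t => w t (u t)) (Icc a b)) :
    Φ b (u b) - Φ a (u a) = ∫ t in a..b, Φ' t (u t) (w t (u t) - v t (u t)) := by
  have hderiv : ∀ t ∈ Icc a b, HasDerivWithinAt (fun s => Φ s (u s))
      (Φ' t (u t) (w t (u t) - v t (u t))) (Icc a b) t := fun t ht =>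
    hasDerivWithinAt_image_of_isFlowInvariantOn hΦ hΦ' hΦ'c ht (hu t ht)
  have hΦ'u : ContinuousOn (fun t => Φ' t (u t)) (Icc a b) :=
    hΦ'c.comp (continuousOn_id.prodMk hu.continuousOn) fun t ht => ⟨ht, mem_univ _⟩
  exact (integral_eq_sub_of_hasDerivAt_of_le hab (fun t ht => (hderiv t ht).continuousWithinAt)
    (fun t ht => (hderiv t (Ioo_subset_Icc_self ht)).hasDerivAt (Icc_mem_nhds ht.1 ht.2))
    ((hΦ'u.clm_apply (hw.sub hv)).intervalIntegrable_of_Icc hab)).symm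

variable [NormedAddCommGroup P] [NormedSpace ℝ P] [NormedAddCommGroup G] [NormedSpace ℝ G]
  {f : E × P × ℝ → E} {x : P → ℝ → E} {θ₀ : P}

theorem continuousOn_comp_fderiv_parameter {S : Set ℝ} (hf : ContDiff ℝ 1 f)
    (hΦ'c : ContinuousOn ↿Φ' (S ×ˢ univ)) (hx : ContinuousOn ↿x (univ ×ˢ S)) :
    ContinuousOn (fun s : (P × P) × ℝ => (Φ' s.2 (x s.1.1 s.2)).comp
      (fderiv ℝ (fun θ => f (x s.1.1 s.2, θ, s.2)) s.1.2)) (univ ×ˢ S) := by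
  have hxs : ContinuousOn (fun s : (P × P) × ℝ => x s.1.1 s.2) (univ ×ˢ S) :=
    hx.comp (f := fun s : (P × P) × ℝ => (s.1.1, s.2)) (by fun_prop)
      fun s hs => ⟨mem_univ _, hs.2⟩
  refine (hΦ'c.comp (continuousOn_snd.prodMk hxs) fun s hs => ⟨hs.2, mem_univ _⟩).clm_comp ?_
  exact (continuous_fderiv_parameter hf).comp_continuousOn
    (hxs.prodMk ((continuous_snd.comp continuous_fst).prodMk continuous_snd).continuousOn)

theorem hasFDerivAt_image_sub_image_of_isFlowInvariantOn [CompleteSpace F] (hab : a ≤ b)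
    (hf : ContDiff ℝ 1 f) (hx : ∀ θ, IsIntegralCurveOn (x θ) (fun t y => f (y, θ, t)) (Icc a b))
    (hxc : ContinuousOn ↿x (univ ×ˢ Icc a b))
    (hΦ : IsFlowInvariantOn Φ (fun t y => f (y, θ₀, t)) (Icc a b))
    (hΦ' : ∀ t ∈ Icc a b, ∀ y, HasFDerivAt (Φ t) (Φ' t y) y)
    (hΦ'c : ContinuousOn ↿Φ' (Icc a b ×ˢ univ)) :
    HasFDerivAt (fun θ => Φ b (x θ b) - Φ a (x θ a))
      (∫ t in a..b, (Φ' t (x θ₀ t)).comp (fderiv ℝ (fun θ => f (x θ₀ t, θ, t)) θ₀)) θ₀ := by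
  have hfx : ∀ η θ, ContinuousOn (fun t => f (x η t, θ, t)) (Icc a b) := fun η θ =>
    hf.continuous.comp_continuousOn
      ((hx η).continuousOn.prodMk (continuousOn_const.prodMk continuousOn_id))
  have hΦ'x : ∀ η, ContinuousOn (fun t => Φ' t (x η t)) (Icc a b) := fun η =>
    hΦ'c.comp (continuousOn_id.prodMk (hx η).continuousOn) fun t ht => ⟨ht, mem_univ _⟩
  have hAG : ∀ θ, Φ b (x θ b) - Φ a (x θ a) = ∫ t in a..b,
      (Φ' t (x θ t) (f (x θ t, θ, t)) - Φ' t (x θ t) (f (x θ t, θ₀, t))) := fun θ => by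
    simp only [← map_sub]
    exact image_sub_image_eq_integral_of_isFlowInvariantOn hab hΦ hΦ' hΦ'c (hx θ)
      (hfx θ θ₀) (hfx θ θ)
  simp only [hAG]
  refine hasFDerivAt_integral_diag_sub (G := fun η θ t => Φ' t (x η t) (f (x η t, θ, t)))
    (G' := fun η θ t => (Φ' t (x η t)).comp (fderiv ℝ (fun θ => f (x η t, θ, t)) θ)) θ₀
    (fun η θ => ((hΦ'x η).clm_apply (hfx η θ)).intervalIntegrable_of_Icc hab)
    (fun η θ t _ => (Φ' t (x η t)).hasFDerivAt.comp θ ?_) ?_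
  · exact ((hf.differentiable one_ne_zero).comp
      (by fun_prop : Differentiable ℝ fun θ => (x η t, θ, t)) θ).hasFDerivAt
  · rw [uIcc_of_le hab]
    exact continuousOn_comp_fderiv_parameter hf hΦ'c hxc

theorem hasFDerivAt_comp_image_of_isFlowInvariantOn [CompleteSpace F] [CompleteSpace G]
    (hab : a ≤ b) (hf : ContDiff ℝ 1 f)
    (hx : ∀ θ, IsIntegralCurveOn (x θ) (fun t y => f (y, θ, t)) (Icc a b))
    (hxc : ContinuousOn ↿x (univ ×ˢ Icc a b))
    (hΦ : IsFlowInvariantOn Φ (fun t y => f (y, θ₀, t)) (Icc a b))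
    (hΦ' : ∀ t ∈ Icc a b, ∀ y, HasFDerivAt (Φ t) (Φ' t y) y)
    (hΦ'c : ContinuousOn ↿Φ' (Icc a b ×ˢ univ)) {c : F} (hxa : ∀ θ, Φ a (x θ a) = c)
    {L : F → G} {L' : F →L[ℝ] G} (hL : HasFDerivAt L L' (Φ b (x θ₀ b))) :
    HasFDerivAt (fun θ => L (Φ b (x θ b)))
      (∫ t in a..b, (L'.comp (Φ' t (x θ₀ t))).comp
        (fderiv ℝ (fun θ => f (x θ₀ t, θ, t)) θ₀)) θ₀ := by
  have hend : HasFDerivAt (fun θ => Φ b (x θ b))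
      (∫ t in a..b, (Φ' t (x θ₀ t)).comp (fderiv ℝ (fun θ => f (x θ₀ t, θ, t)) θ₀)) θ₀ := by
    simpa only [hxa, sub_add_cancel] using
      (hasFDerivAt_image_sub_image_of_isFlowInvariantOn hab hf hx hxc hΦ hΦ' hΦ'c).add_const c
  have hcont : ContinuousOn (fun t => (Φ' t (x θ₀ t)).comp
      (fderiv ℝ (fun θ => f (x θ₀ t, θ, t)) θ₀)) (Icc a b) :=
    (continuousOn_comp_fderiv_parameter hf hΦ'c hxc).comp
      (f := fun t => ((θ₀, θ₀), t)) (by fun_prop) fun t ht => ⟨mem_univ _, ht⟩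
  exact hasFDerivAt_comp_of_integral (y := fun θ => Φ b (x θ b)) hL hend
    (hcont.intervalIntegrable_of_Icc hab)

end FlowInvariants

section PiecewiseFlow

variable {E : Type*} [NormedAddCommGroup E] [NormedSpace ℝ E]

/-- `y` is a continuous path on `[t₀, T]` following the field `v` up to the switching time `τ` and
the field `w` afterwards. The equation for `w` is imposed on `(τ, T]` only: at `τ` no right
derivative is prescribed. -/
structure IsPiecewiseSolution (v w : ℝ → E → E) (t₀ τ T : ℝ) (y : ℝ → E) : Prop where
  continuousOn : ContinuousOn y (Icc t₀ T)
  left : IsIntegralCurveOn y v (Icc t₀ τ)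
  right : IsIntegralCurveOn y w (Ioc τ T)

/-- `Φ t` is the map `Φ_{t,T}` sending the state of a piecewise solution at time `t` to its state
at the terminal time `T`; every state is assumed to lie on a piecewise solution on all of
`[t₀, T]`. -/
def IsTerminalMap (v w : ℝ → E → E) (t₀ τ T : ℝ) (Φ : ℝ → E → E) : Prop :=
  ∀ t ∈ Icc t₀ T, ∀ x, ∃ y, y t = x ∧ IsPiecewiseSolution v w t₀ τ T y ∧ Φ t x = y T

variable {v w : ℝ → E → E} {t₀ τ T : ℝ} {y y₁ y₂ : ℝ → E} {Φ : ℝ → E → E}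

theorem IsPiecewiseSolution.right_Icc (hy : IsPiecewiseSolution v w t₀ τ T y) (ht₀ : t₀ ≤ τ)
    (hτ : τ < T) (hw : Continuous ↿w) : IsIntegralCurveOn y w (Icc τ T) :=
  isIntegralCurveOn_Icc_of_Ioc hτ hw (hy.continuousOn.mono (Icc_subset_Icc_left ht₀)) hy.right

theorem IsPiecewiseSolution.eq_terminal (hy₁ : IsPiecewiseSolution v w t₀ τ T y₁)
    (hy₂ : IsPiecewiseSolution v w t₀ τ T y₂) (ht₀ : t₀ ≤ τ) (hτ : τ < T)
    (hv : ContDiff ℝ 1 ↿v) (hw : ContDiff ℝ 1 ↿w) {t : ℝ} (ht : t ∈ Icc t₀ T)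
    (h : y₁ t = y₂ t) : y₁ T = y₂ T := by
  have hr₁ := hy₁.right_Icc ht₀ hτ hw.continuous
  have hr₂ := hy₂.right_Icc ht₀ hτ hw.continuous
  rcases le_total t τ with htτ | hτt
  · have hleft : Icc t τ ⊆ Icc t₀ τ := Icc_subset_Icc_left ht.1
    have hswitch : y₁ τ = y₂ τ :=
      eqOn_Icc_of_isIntegralCurveOn hv (hy₁.left.mono hleft) (hy₂.left.mono hleft) h
        (right_mem_Icc.2 htτ)
    exact eqOn_Icc_of_isIntegralCurveOn hw hr₁ hr₂ hswitch (right_mem_Icc.2 hτ.le)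
  · have hright : Icc t T ⊆ Icc τ T := Icc_subset_Icc_left hτt
    exact eqOn_Icc_of_isIntegralCurveOn hw (hr₁.mono hright) (hr₂.mono hright) h
      (right_mem_Icc.2 ht.2)

theorem IsTerminalMap.apply_terminal (hΦ : IsTerminalMap v w t₀ τ T Φ) (h : t₀ ≤ T) (x : E) :
    Φ T x = x := by
  obtain ⟨y, hyT, -, hΦy⟩ := hΦ T (right_mem_Icc.2 h) x
  exact hΦy.trans hyT

theorem IsTerminalMap.apply_eq (hΦ : IsTerminalMap v w t₀ τ T Φ)
    (hy : IsPiecewiseSolution v w t₀ τ T y) (ht₀ : t₀ ≤ τ) (hτ : τ < T)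
    (hv : ContDiff ℝ 1 ↿v) (hw : ContDiff ℝ 1 ↿w) {t : ℝ} (ht : t ∈ Icc t₀ T) :
    Φ t (y t) = y T := by
  obtain ⟨y', hy't, hy', hΦy'⟩ := hΦ t ht (y t)
  exact hΦy'.trans (hy'.eq_terminal hy ht₀ hτ hv hw ht hy't)

theorem IsTerminalMap.isFlowInvariantOn_left (hΦ : IsTerminalMap v w t₀ τ T Φ) (ht₀ : t₀ ≤ τ)
    (hτ : τ < T) (hv : ContDiff ℝ 1 ↿v) (hw : ContDiff ℝ 1 ↿w) :
    IsFlowInvariantOn Φ v (Icc t₀ τ) := by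
  have hsub : Icc t₀ τ ⊆ Icc t₀ T := Icc_subset_Icc_right hτ.le
  intro t ht x
  obtain ⟨y, hyt, hy, hΦy⟩ := hΦ t (hsub ht) x
  exact ⟨y, hyt, hy.left, fun s hs =>
    (hΦ.apply_eq hy ht₀ hτ hv hw (hsub hs)).trans hΦy.symm⟩

theorem IsTerminalMap.isFlowInvariantOn_right (hΦ : IsTerminalMap v w t₀ τ T Φ) (ht₀ : t₀ ≤ τ)
    (hτ : τ < T) (hv : ContDiff ℝ 1 ↿v) (hw : ContDiff ℝ 1 ↿w) :
    IsFlowInvariantOn Φ w (Icc τ T) := by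
  have hsub : Icc τ T ⊆ Icc t₀ T := Icc_subset_Icc_left ht₀
  intro t ht x
  obtain ⟨y, hyt, hy, hΦy⟩ := hΦ t (hsub ht) x
  exact ⟨y, hyt, hy.right_Icc ht₀ hτ hw.continuous, fun s hs =>
    (hΦ.apply_eq hy ht₀ hτ hv hw (hsub hs)).trans hΦy.symm⟩

variable {P Q F : Type*} [NormedAddCommGroup P] [NormedSpace ℝ P] [NormedAddCommGroup Q]
  [NormedSpace ℝ Q] [NormedAddCommGroup F] [NormedSpace ℝ F]

theorem contDiff_uncurry_parameter {f : E × P × ℝ → F} (hf : ContDiff ℝ 1 f) (θ : P) :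
    ContDiff ℝ 1 ↿(fun (t : ℝ) (x : E) => f (x, θ, t)) :=
  hf.comp (contDiff_snd.prodMk (contDiff_const.prodMk contDiff_fst))

theorem piecewise_continuous_backpropagation_general [CompleteSpace E] [CompleteSpace F]
    (ht₀ : t₀ ≤ τ) (hτ : τ < T) {f : E × P × ℝ → E} (hf : ContDiff ℝ 1 f)
    {g : E × Q × ℝ → E} (hg : ContDiff ℝ 1 g) {z₀ : E} {z : P × Q → ℝ → E}
    (hz₀ : ∀ ψ, z ψ t₀ = z₀)
    (hz : ∀ ψ, IsPiecewiseSolution (fun t x => f (x, ψ.1, t)) (fun t x => g (x, ψ.2, t))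
      t₀ τ T (z ψ))
    (hzc : ContinuousOn ↿z (univ ×ˢ Icc t₀ T)) {θ₀ : P} {φ₀ : Q}
    (hΦ : IsTerminalMap (fun t x => f (x, θ₀, t)) (fun t x => g (x, φ₀, t)) t₀ τ T Φ)
    {Φ' : ℝ → E → E →L[ℝ] E} (hΦ' : ∀ t ∈ Icc t₀ T, ∀ x, HasFDerivAt (Φ t) (Φ' t x) x)
    (hΦ'c : ContinuousOn ↿Φ' (Icc t₀ T ×ˢ univ)) {L : E → F} {L' : E →L[ℝ] F}
    (hL : HasFDerivAt L L' (z (θ₀, φ₀) T)) :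
    HasFDerivAt (fun θ => L (z (θ, φ₀) T))
        (∫ t in t₀..τ, (L'.comp (Φ' t (z (θ₀, φ₀) t))).comp
          (fderiv ℝ (fun θ => f (z (θ₀, φ₀) t, θ, t)) θ₀)) θ₀ ∧
      HasFDerivAt (fun φ => L (z (θ₀, φ) T))
        (∫ t in τ..T, (L'.comp (Φ' t (z (θ₀, φ₀) t))).comp
          (fderiv ℝ (fun φ => g (z (θ₀, φ₀) t, φ, t)) φ₀)) φ₀ := by
  have hv := contDiff_uncurry_parameter hf θ₀
  have hw := contDiff_uncurry_parameter hg φ₀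
  have hleft_sub : Icc t₀ τ ⊆ Icc t₀ T := Icc_subset_Icc_right hτ.le
  have hright_sub : Icc τ T ⊆ Icc t₀ T := Icc_subset_Icc_left ht₀
  have hzr := fun ψ => (hz ψ).right_Icc ht₀ hτ (contDiff_uncurry_parameter hg ψ.2).continuous
  have hΦl := hΦ.isFlowInvariantOn_left ht₀ hτ hv hw
  have hΦr := hΦ.isFlowInvariantOn_right ht₀ hτ hv hw
  have hΦT : ∀ x, Φ T x = x := hΦ.apply_terminal (ht₀.trans hτ.le)
  constructor
  · have hswitch : ∀ θ, Φ τ (z (θ, φ₀) τ) = z (θ, φ₀) T := fun θ =>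
      (hΦr.image_right_eq hτ.le hw (hzr (θ, φ₀))).symm.trans (hΦT _)
    simp only [← hswitch] at hL ⊢
    exact hasFDerivAt_comp_image_of_isFlowInvariantOn (x := fun θ => z (θ, φ₀)) ht₀ hf
      (fun θ => (hz (θ, φ₀)).left)
      (hzc.comp (f := fun s : P × ℝ => ((s.1, φ₀), s.2)) (by fun_prop)
        fun s hs => ⟨mem_univ _, hleft_sub hs.2⟩)
      hΦl (fun t ht => hΦ' t (hleft_sub ht)) (hΦ'c.mono (prod_mono_left hleft_sub))
      (fun θ => congrArg (Φ t₀) (hz₀ (θ, φ₀))) hL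
  · have hinit : ∀ φ, Φ τ (z (θ₀, φ) τ) = Φ t₀ z₀ := fun φ =>
      (hΦl.image_right_eq ht₀ hv (hz (θ₀, φ)).left).trans (congrArg (Φ t₀) (hz₀ (θ₀, φ)))
    simpa only [hΦT] using hasFDerivAt_comp_image_of_isFlowInvariantOn
      (x := fun φ => z (θ₀, φ)) hτ.le hg (fun φ => hzr (θ₀, φ))
      (hzc.comp (f := fun s : Q × ℝ => ((θ₀, s.1), s.2)) (by fun_prop)
        fun s hs => ⟨mem_univ _, hright_sub hs.2⟩)
      hΦr (fun t ht => hΦ' t (hright_sub ht)) (hΦ'c.mono (prod_mono_left hright_sub))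
      hinit ((hΦT _).symm ▸ hL)

end PiecewiseFlow

/-- **Piecewise continuous backpropagation.**  Consider a path `z` with `z 0 = z₀` which
follows the field `f` with parameters `θ` on `[0, T/2]` and the field `g` with
parameters `φ` on `(T/2, T]`.  For a differentiable terminal loss `L`, with adjoint
`a t = DL (z T) ∘ D_x Φ_{t,T} (z t)` (where `Φ_{t,T}` is the piecewise
time-`t`-to-time-`T` solution map), the gradient with respect to each parameter set is
obtained by integrating the adjoint against the corresponding parameter Jacobian only
over the time interval on which that field acts. -/
theorem piecewise_continuous_backpropagation
    (n p q : ℕ) (hn : 1 ≤ n) (hp : 1 ≤ p) (hq : 1 ≤ q) (T : ℝ) (hT : 0 < T)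
    (f : (Fin n → ℝ) × (Fin p → ℝ) × ℝ → (Fin n → ℝ)) (hf : ContDiff ℝ 1 f)
    (g : (Fin n → ℝ) × (Fin q → ℝ) × ℝ → (Fin n → ℝ)) (hg : ContDiff ℝ 1 g)
    (z₀ : Fin n → ℝ)
    (z : ((Fin p → ℝ) × (Fin q → ℝ)) → ℝ → (Fin n → ℝ))
    (hzcont : ∀ ψ, ContinuousOn (z ψ) (Icc (0 : ℝ) T))
    (hz0 : ∀ ψ, z ψ 0 = z₀)
    (hzode₁ : ∀ ψ, ∀ t ∈ Icc (0 : ℝ) (T / 2),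
      HasDerivWithinAt (z ψ) (f (z ψ t, ψ.1, t)) (Icc (0 : ℝ) (T / 2)) t)
    (hzode₂ : ∀ ψ, ∀ t ∈ Ioc (T / 2) T,
      HasDerivWithinAt (z ψ) (g (z ψ t, ψ.2, t)) (Ioc (T / 2) T) t)
    (Dz : ℝ → ((Fin p → ℝ) × (Fin q → ℝ)) →
      (((Fin p → ℝ) × (Fin q → ℝ)) →L[ℝ] (Fin n → ℝ)))
    (hDz : ∀ t ∈ Icc (0 : ℝ) T, ∀ ψ, HasFDerivAt (fun ψ' => z ψ' t) (Dz t ψ) ψ)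
    (hDzcont : Continuous fun s : ℝ × ((Fin p → ℝ) × (Fin q → ℝ)) => Dz s.1 s.2)
    (θ₀ : Fin p → ℝ) (φ₀ : Fin q → ℝ)
    (Φ : ℝ → (Fin n → ℝ) → (Fin n → ℝ))
    (hΦ : ∀ t ∈ Icc (0 : ℝ) T, ∀ x, ∃ y : ℝ → (Fin n → ℝ),
      y t = x ∧ ContinuousOn y (Icc (0 : ℝ) T) ∧
        (∀ s ∈ Icc (0 : ℝ) (T / 2),
          HasDerivWithinAt y (f (y s, θ₀, s)) (Icc (0 : ℝ) (T / 2)) s) ∧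
        (∀ s ∈ Ioc (T / 2) T,
          HasDerivWithinAt y (g (y s, φ₀, s)) (Ioc (T / 2) T) s) ∧
        Φ t x = y T)
    (DΦ : ℝ → (Fin n → ℝ) → ((Fin n → ℝ) →L[ℝ] (Fin n → ℝ)))
    (hDΦ : ∀ t ∈ Icc (0 : ℝ) T, ∀ x, HasFDerivAt (Φ t) (DΦ t x) x)
    (hDΦcont : Continuous fun s : ℝ × (Fin n → ℝ) => DΦ s.1 s.2)
    (L : (Fin n → ℝ) → ℝ) (hL : Differentiable ℝ L)
    (a : ℝ → ((Fin n → ℝ) →L[ℝ] ℝ))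
    (ha : a = fun t => (fderiv ℝ L (z (θ₀, φ₀) T)).comp (DΦ t (z (θ₀, φ₀) t))) :
    fderiv ℝ (fun θ => L (z (θ, φ₀) T)) θ₀ =
        (∫ t in (0 : ℝ)..(T / 2),
          (a t).comp (fderiv ℝ (fun θ => f (z (θ₀, φ₀) t, θ, t)) θ₀)) ∧
      fderiv ℝ (fun φ => L (z (θ₀, φ) T)) φ₀ =
        ∫ t in (T / 2)..T,
          (a t).comp (fderiv ℝ (fun φ => g (z (θ₀, φ₀) t, φ, t)) φ₀) := by
  subst ha
  have hzc := continuousOn_uncurry_of_hasFDerivAt hzcont hDz hDzcont.continuousOn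
  have hΦterm : IsTerminalMap (fun t x => f (x, θ₀, t)) (fun t x => g (x, φ₀, t)) 0 (T / 2) T Φ :=
    fun t ht x => by
      obtain ⟨y, hyt, hyc, hy₁, hy₂, hΦy⟩ := hΦ t ht x
      exact ⟨y, hyt, ⟨hyc, hy₁, hy₂⟩, hΦy⟩
  obtain ⟨hθ, hφ⟩ := piecewise_continuous_backpropagation_general (half_pos hT).le
    (half_lt_self hT) hf hg hz0 (fun ψ => ⟨hzcont ψ, hzode₁ ψ, hzode₂ ψ⟩) hzc hΦterm hDΦ
    hDΦcont.continuousOn (hL _).hasFDerivAt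
  exact ⟨hθ.fderiv, hφ.fderiv⟩
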